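/- arXiv:2508.12716 — 2 statements merged into one kernel-verified Lean document; each statement's English description precedes it below -/
import Mathlib

section
/- For all u, v ∈ ℝ, the function ρ ↦ φ(u)·Φ((v - ρu)/√(1-ρ²)) (which equals the partial derivative of Φ₂(u,v;ρ) in its first argument) is differentiable at every ρ ∈ (-1,1), with derivative equal to -((u - ρv)/(1-ρ²)) · φ₂(u,v;ρ) (the paper's formula for the mixed derivative Φ₂^{ρμ}). -/
/-!
By the fundamental theorem of calculus `Phi` has derivative `phi`, so the chain rule gives the derivative
`phi u * (phi w * w')` with `w = (v - ρ u) / √(1 - ρ²)`. Differentiating the quotient yields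
`w' = -(u - ρ v) / ((1 - ρ²) √(1 - ρ²))`, and completing the square,
`u² + w² = (u² - 2 ρ u v + v²) / (1 - ρ²)`, gives `phi u * phi w = √(1 - ρ²) * phi2 u v ρ`.
-/

open Real MeasureTheory

/-- Standard normal density. -/
noncomputable def phi (t : ℝ) : ℝ := (Real.sqrt (2 * Real.pi))⁻¹ * Real.exp (-(t ^ 2) / 2)

/-- Standard normal CDF. -/
noncomputable def Phi (u : ℝ) : ℝ := ∫ t in Set.Iic u, phi t

/-- Standard bivariate normal density with correlation ρ. -/
noncomputable def phi2 (s t ρ : ℝ) : ℝ :=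
  (2 * Real.pi * Real.sqrt (1 - ρ ^ 2))⁻¹ *
    Real.exp (-(s ^ 2 - 2 * ρ * s * t + t ^ 2) / (2 * (1 - ρ ^ 2)))

/-- Standard bivariate normal CDF with correlation ρ. -/
noncomputable def Phi2 (u v ρ : ℝ) : ℝ :=
  ∫ s in Set.Iic u, ∫ t in Set.Iic v, phi2 s t ρ

lemma continuous_phi : Continuous phi := by
  unfold phi
  fun_prop

lemma integrable_phi : Integrable phi := by
  have h := (integrable_exp_neg_mul_sq (b := 1 / 2) (by norm_num)).const_mul
    (Real.sqrt (2 * Real.pi))⁻¹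
  refine h.congr (Filter.Eventually.of_forall fun t => ?_)
  simp only [phi]
  congr 2
  ring

lemma hasDerivAt_Phi (x : ℝ) : HasDerivAt Phi (phi x) x := by
  have h : Phi = fun y => (∫ t in Set.Iic (0 : ℝ), phi t) + ∫ t in (0 : ℝ)..y, phi t := by
    funext y
    rw [← intervalIntegral.integral_Iic_sub_Iic integrable_phi.integrableOn
      integrable_phi.integrableOn]
    simp [Phi]
  rw [h]
  exact (continuous_phi.integral_hasStrictDerivAt 0 x).hasDerivAt.const_add _

/-- The joint density factors into the marginal density and the conditional one: given first
coordinate `u`, the second one is normal with mean `ρ u` and variance `1 - ρ²`. -/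
lemma phi_mul_phi (u v ρ : ℝ) (hρ : 0 < 1 - ρ ^ 2) :
    phi u * phi ((v - ρ * u) / Real.sqrt (1 - ρ ^ 2)) =
      Real.sqrt (1 - ρ ^ 2) * phi2 u v ρ := by
  have hs : Real.sqrt (1 - ρ ^ 2) ≠ 0 := (Real.sqrt_pos.2 hρ).ne'
  have hpi : (Real.sqrt (2 * Real.pi))⁻¹ * (Real.sqrt (2 * Real.pi))⁻¹ = (2 * Real.pi)⁻¹ := by
    rw [← mul_inv, Real.mul_self_sqrt (by positivity)]
  have he : -(u ^ 2) / 2 + -(((v - ρ * u) / Real.sqrt (1 - ρ ^ 2)) ^ 2) / 2 =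
      -(u ^ 2 - 2 * ρ * u * v + v ^ 2) / (2 * (1 - ρ ^ 2)) := by
    rw [div_pow, Real.sq_sqrt hρ.le]
    have := hρ.ne'
    field_simp
    ring
  simp only [phi, phi2]
  rw [mul_mul_mul_comm, hpi, ← Real.exp_add, he]
  field_simp

lemma hasDerivAt_arg (u v ρ : ℝ) (hρ : 0 < 1 - ρ ^ 2) :
    HasDerivAt (fun r => (v - r * u) / Real.sqrt (1 - r ^ 2))
      (-((u - ρ * v) / (1 - ρ ^ 2)) / Real.sqrt (1 - ρ ^ 2)) ρ := by
  have hs : Real.sqrt (1 - ρ ^ 2) ≠ 0 := (Real.sqrt_pos.2 hρ).ne'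
  have hsq : Real.sqrt (1 - ρ ^ 2) ^ 2 = 1 - ρ ^ 2 := Real.sq_sqrt hρ.le
  have h1 : HasDerivAt (fun r : ℝ => v - r * u) (-(1 * u)) ρ :=
    ((hasDerivAt_id ρ).mul_const u).const_sub v
  have h2 : HasDerivAt (fun r : ℝ => 1 - r ^ 2) (-(2 * ρ)) ρ := by
    simpa using (hasDerivAt_pow 2 ρ).const_sub 1
  refine (h1.div (h2.sqrt hρ.ne') hs).congr_deriv ?_
  rw [hsq]
  have := hρ.ne'
  field_simp
  rw [hsq]
  ring

/-- For all u, v ∈ ℝ, the map ρ ↦ φ(u)·Φ((v - ρu)/√(1-ρ²)) is differentiable at every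
ρ ∈ (-1,1) with derivative -((u - ρv)/(1-ρ²)) · φ₂(u,v;ρ). -/
theorem mixed_derivative_Phi2_rho_mu (u v : ℝ) :
    ∀ ρ ∈ Set.Ioo (-1 : ℝ) 1,
      HasDerivAt (fun r => phi u * Phi ((v - r * u) / Real.sqrt (1 - r ^ 2)))
        (-((u - ρ * v) / (1 - ρ ^ 2)) * phi2 u v ρ) ρ := by
  intro ρ hρ
  have hpos : 0 < 1 - ρ ^ 2 := by nlinarith [hρ.1, hρ.2]
  have hs : Real.sqrt (1 - ρ ^ 2) ≠ 0 := (Real.sqrt_pos.2 hpos).ne'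
  have h := ((hasDerivAt_Phi _).comp ρ (hasDerivAt_arg u v ρ hpos)).const_mul (phi u)
  refine h.congr_deriv ?_
  rw [← mul_assoc, phi_mul_phi u v ρ hpos]
  field_simp
end

section
/- For all fixed u, v ∈ ℝ, the function ρ ↦ Φ₂(u,v;ρ) is strictly increasing on (-1,1). (This underlies the one-to-one local Gaussian representation of the joint distribution: the local correlation parameter is identified from the value of the joint CDF given the marginals.) -/
/-!
Conditioning on the first coordinate writes the inner integral as
`∫ t ≤ v, φ₂(s,t;ρ) dt = φ(s) · Φ((v - ρ s) / √(1 - ρ²))`.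
For `ρ₁ < ρ₂` the difference of the two arguments of `Φ` is affine in `s` with slope
`-(ρ₂ / √(1 - ρ₂²) - ρ₁ / √(1 - ρ₁²)) < 0`, so the difference `D` of the inner integrals is
positive to the left of some point `c` and negative to the right of it. By Fubini and the symmetry
of `φ₂`, both inner integrals have total mass `Φ(v)`, hence `∫ D = 0`. Therefore
`∫ s ≤ u, D` is positive: directly if `u ≤ c`, and as `-∫ s > u, D` if `c < u`.
-/

open Real MeasureTheory

open ProbabilityTheory Set

/-- The bivariate density is the standard normal density of `s` times the conditional density
`N(ρ s, 1 - ρ²)` of `t`. -/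
lemma phi2_eq_mul {ρ : ℝ} (hρ : ρ ∈ Ioo (-1 : ℝ) 1) (s t : ℝ) :
    phi2 s t ρ = gaussianPDFReal 0 1 s * gaussianPDFReal (ρ * s) (1 - ρ ^ 2).toNNReal t := by
  have h : 0 < 1 - ρ ^ 2 := by nlinarith [hρ.1, hρ.2]
  have e : (2 * π * √(1 - ρ ^ 2))⁻¹ = (√(2 * π))⁻¹ * (√(2 * π * (1 - ρ ^ 2)))⁻¹ := by
    rw [← mul_inv, Real.sqrt_mul (by positivity : (0 : ℝ) ≤ 2 * π), ← mul_assoc,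
      Real.mul_self_sqrt (by positivity)]
  simp only [phi2, gaussianPDFReal, Real.coe_toNNReal _ h.le, NNReal.coe_one, mul_one, e]
  rw [mul_mul_mul_comm, ← Real.exp_add]
  congr 2
  field_simp
  ring

lemma phi2_comm (s t ρ : ℝ) : phi2 s t ρ = phi2 t s ρ := by
  simp only [phi2]
  congr 3
  ring

lemma toNNReal_ne_zero {ρ : ℝ} (hρ : ρ ∈ Ioo (-1 : ℝ) 1) : (1 - ρ ^ 2).toNNReal ≠ 0 := by
  have h : 0 < 1 - ρ ^ 2 := by nlinarith [hρ.1, hρ.2]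
  simpa using h

lemma integral_phi2 {ρ : ℝ} (hρ : ρ ∈ Ioo (-1 : ℝ) 1) (s : ℝ) :
    ∫ t, phi2 s t ρ = gaussianPDFReal 0 1 s := by
  simp_rw [phi2_eq_mul hρ]
  rw [integral_const_mul, integral_gaussianPDFReal_eq_one _ (toNNReal_ne_zero hρ), mul_one]

lemma integrable_phi2 {ρ : ℝ} (hρ : ρ ∈ Ioo (-1 : ℝ) 1) :
    Integrable (fun p : ℝ × ℝ => phi2 p.1 p.2 ρ) (volume.prod volume) := by
  have hc : Continuous (fun p : ℝ × ℝ => phi2 p.1 p.2 ρ) := by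
    unfold phi2
    fun_prop
  have hn : ∀ s t, ‖phi2 s t ρ‖ = phi2 s t ρ := fun s t => by
    rw [Real.norm_of_nonneg]
    unfold phi2
    positivity
  rw [integrable_prod_iff hc.aestronglyMeasurable]
  refine ⟨Filter.Eventually.of_forall fun s => ?_, ?_⟩
  · simp_rw [phi2_eq_mul hρ]
    exact (integrable_gaussianPDFReal _ _).const_mul _
  · simp_rw [hn, integral_phi2 hρ]
    exact integrable_gaussianPDFReal _ _

lemma integrable_phi2_restrict {ρ : ℝ} (hρ : ρ ∈ Ioo (-1 : ℝ) 1) (v : ℝ) :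
    Integrable (fun p : ℝ × ℝ => phi2 p.1 p.2 ρ) (volume.prod (volume.restrict (Iic v))) := by
  have h := (integrable_phi2 hρ).restrict (s := univ ×ˢ Iic v)
  rwa [← Measure.prod_restrict, Measure.restrict_univ] at h

lemma integrable_inner_phi2 {ρ : ℝ} (hρ : ρ ∈ Ioo (-1 : ℝ) 1) (v : ℝ) :
    Integrable (fun s => ∫ t in Iic v, phi2 s t ρ) :=
  (integrable_phi2_restrict hρ v).integral_prod_left

/-- The second marginal of the bivariate normal law does not depend on `ρ`. -/
lemma integral_inner_phi2 {ρ : ℝ} (hρ : ρ ∈ Ioo (-1 : ℝ) 1) (v : ℝ) :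
    ∫ s, ∫ t in Iic v, phi2 s t ρ = ∫ t in Iic v, gaussianPDFReal 0 1 t := by
  rw [integral_integral_swap (integrable_phi2_restrict hρ v)]
  simp_rw [phi2_comm _ _ ρ, integral_phi2 hρ]

lemma inner_phi2_eq {ρ : ℝ} (hρ : ρ ∈ Ioo (-1 : ℝ) 1) (v s : ℝ) :
    ∫ t in Iic v, phi2 s t ρ =
      gaussianPDFReal 0 1 s * (gaussianReal 0 1).real (Iic ((v - ρ * s) / √(1 - ρ ^ 2))) := by
  have h : 0 < 1 - ρ ^ 2 := by nlinarith [hρ.1, hρ.2]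
  have hs : 0 < √(1 - ρ ^ 2) := Real.sqrt_pos.2 h
  simp_rw [phi2_eq_mul hρ]
  rw [integral_const_mul]
  congr 1
  -- `N(ρ s, 1 - ρ²)` is the image of `N(0, 1)` under `x ↦ √(1 - ρ²) x + ρ s`.
  have hmap : gaussianReal (ρ * s) (1 - ρ ^ 2).toNNReal =
      (gaussianReal 0 1).map (fun x => √(1 - ρ ^ 2) * x + ρ * s) := by
    have := gaussianReal_map_const_mul (μ := 0) (v := 1) (√(1 - ρ ^ 2))
    have h2 := gaussianReal_map_add_const (μ := 0) (v := (1 - ρ ^ 2).toNNReal) (ρ * s)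
    have hv : NNReal.mk (√(1 - ρ ^ 2) ^ 2) (sq_nonneg _) * 1 = (1 - ρ ^ 2).toNNReal := by
      ext
      simp [Real.sq_sqrt h.le, h.le]
    rw [mul_zero, hv] at this
    rw [zero_add, ← this, Measure.map_map (by fun_prop) (by fun_prop)] at h2
    exact h2.symm
  have hpre : (fun x => √(1 - ρ ^ 2) * x + ρ * s) ⁻¹' Iic v =
      Iic ((v - ρ * s) / √(1 - ρ ^ 2)) := by
    ext x
    simp only [mem_preimage, mem_Iic, le_div_iff₀ hs]
    constructor <;> intro hx <;> linarith
  rw [← hpre, ← map_measureReal_apply (by fun_prop) measurableSet_Iic, ← hmap, measureReal_def,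
    gaussianReal_apply_eq_integral _ (toNNReal_ne_zero hρ), ENNReal.toReal_ofReal]
  exact integral_nonneg fun x => gaussianPDFReal_nonneg _ _ _

lemma strictMono_gaussianReal_Iic :
    StrictMono (fun x : ℝ => (gaussianReal 0 1).real (Iic x)) := by
  intro a b hab
  have hpos : 0 < (gaussianReal 0 1).real (Ioc a b) := by
    rw [measureReal_def, ENNReal.toReal_pos_iff]
    refine ⟨pos_iff_ne_zero.2 fun h0 => ?_, measure_lt_top _ _⟩
    have := gaussianReal_absolutelyContinuous' 0 one_ne_zero h0
    rw [Real.volume_Ioc, ENNReal.ofReal_eq_zero] at this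
    linarith
  have hu : (gaussianReal 0 1).real (Iic a ∪ Ioc a b) =
      (gaussianReal 0 1).real (Iic a) + (gaussianReal 0 1).real (Ioc a b) :=
    measureReal_union (Iic_disjoint_Ioc le_rfl) measurableSet_Ioc
  rw [Iic_union_Ioc_eq_Iic hab.le] at hu
  simp only [hu]
  linarith

lemma strictMonoOn_div_sqrt {a b : ℝ} (ha : a ∈ Ioo (-1 : ℝ) 1) (hb : b ∈ Ioo (-1 : ℝ) 1)
    (hab : a < b) : a / √(1 - a ^ 2) < b / √(1 - b ^ 2) := by
  rw [← Real.tan_arcsin, ← Real.tan_arcsin]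
  exact Real.strictMonoOn_tan
    ⟨Real.neg_pi_div_two_lt_arcsin.2 ha.1, Real.arcsin_lt_pi_div_two.2 ha.2⟩
    ⟨Real.neg_pi_div_two_lt_arcsin.2 hb.1, Real.arcsin_lt_pi_div_two.2 hb.2⟩
    (Real.strictMonoOn_arcsin ⟨ha.1.le, ha.2.le⟩ ⟨hb.1.le, hb.2.le⟩ hab)

lemma setIntegral_pos_of_pos {f : ℝ → ℝ} {S : Set ℝ} (hf : Integrable f) (hS : MeasurableSet S)
    (hvol : 0 < volume S) (hpos : ∀ x ∈ S, 0 < f x) : 0 < ∫ x in S, f x := by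
  rw [setIntegral_pos_iff_support_of_nonneg_ae
    (ae_restrict_of_forall_mem hS fun x hx => (hpos x hx).le) hf.integrableOn]
  exact hvol.trans_le (measure_mono fun x hx => ⟨(hpos x hx).ne', hx⟩)

/-- An integrable function of total integral zero that changes sign once, from positive to
negative, has positive integral over every left half-line. -/
lemma integral_Iic_pos_of_sign_change {D : ℝ → ℝ} (hD : Integrable D) (h0 : ∫ x, D x = 0) {c : ℝ}
    (hl : ∀ x < c, 0 < D x) (hr : ∀ x, c < x → D x < 0) (u : ℝ) : 0 < ∫ x in Iic u, D x := by
  rcases le_or_gt u c with huc | huc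
  · rw [integral_Iic_eq_integral_Iio]
    exact setIntegral_pos_of_pos hD measurableSet_Iio (by simp)
      fun x hx => hl x (lt_of_lt_of_le hx huc)
  · have h1 : 0 < ∫ x in Ioi u, -D x :=
      setIntegral_pos_of_pos hD.neg measurableSet_Ioi (by simp)
        fun x hx => neg_pos.2 (hr x (huc.trans hx))
    have h2 := intervalIntegral.integral_Iic_add_Ioi (b := u) hD.integrableOn hD.integrableOn
    rw [integral_neg] at h1
    linarith

/-- For all fixed u, v ∈ ℝ, the map ρ ↦ Φ₂(u,v;ρ) is strictly increasing on (-1,1). -/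
theorem Phi2_strictMonoOn_rho (u v : ℝ) :
    StrictMonoOn (fun ρ => Phi2 u v ρ) (Set.Ioo (-1 : ℝ) 1) := by
  intro a ha b hb hab
  have hk := strictMonoOn_div_sqrt ha hb hab
  set α := √(1 - a ^ 2)
  set β := √(1 - b ^ 2)
  have hD := (integrable_inner_phi2 hb v).sub (integrable_inner_phi2 ha v)
  -- The point where `(v - a s) / α` and `(v - b s) / β` agree.
  let c := (v / β - v / α) / (b / β - a / α)
  have hk' : 0 < b / β - a / α := sub_pos.2 hk
  have hdiff : ∀ s, (v - b * s) / β - (v - a * s) / α = (c - s) * (b / β - a / α) := by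
    intro s
    have : c * (b / β - a / α) = v / β - v / α := div_mul_cancel₀ _ hk'.ne'
    rw [sub_mul, this]
    ring
  have key := integral_Iic_pos_of_sign_change hD (c := c) (u := u) ?_ ?_ ?_
  · simp only [Pi.sub_apply] at key
    rw [integral_sub (integrable_inner_phi2 hb v).integrableOn
      (integrable_inner_phi2 ha v).integrableOn] at key
    exact sub_pos.1 key
  · simp only [Pi.sub_apply]
    rw [integral_sub (integrable_inner_phi2 hb v) (integrable_inner_phi2 ha v), integral_inner_phi2 hb,
      integral_inner_phi2 ha, sub_self]
  · intro s hs
    simp only [Pi.sub_apply, inner_phi2_eq ha, inner_phi2_eq hb, sub_pos]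
    refine mul_lt_mul_of_pos_left (strictMono_gaussianReal_Iic ?_)
      (gaussianPDFReal_pos _ _ _ one_ne_zero)
    have := mul_pos (sub_pos.2 hs) hk'
    rw [← hdiff] at this
    exact sub_pos.1 this
  · intro s hs
    simp only [Pi.sub_apply, inner_phi2_eq ha, inner_phi2_eq hb, sub_neg]
    refine mul_lt_mul_of_pos_left (strictMono_gaussianReal_Iic ?_)
      (gaussianPDFReal_pos _ _ _ one_ne_zero)
    have := mul_neg_of_neg_of_pos (sub_neg.2 hs) hk'
    rw [← hdiff] at this
    exact sub_neg.1 this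
end
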